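/- Suppose 1 < p, q < ∞ and the pair (p,q) satisfies one of the following: p = q = 2; p = 2 and q ≠ 2; q = 2 and p ≠ 2; or 1 < q < 2 < p < ∞. Then the set of extreme points of the closed unit ball of L(ℓ^p_2, ℓ^q_2) is closed in the operator norm topology. -/

import Mathlib

/-! The extreme points of the unit ball of `L(ℓ^p_2, ℓ^q_2)` form a closed set for the listed `(p, q)`.

**Parametrization.** For a unit vector `x` let `tang p x` be the direction annihilated by the
norming functional of `x`. If `A` is a contraction and `x`, `y = A x` are unit vectors, then
differentiating `‖x + t v‖ - ‖A (x + t v)‖ ≥ 0` at its minimum `t = 0` shows that `A` sends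
`tang p x` to a multiple `s` of `tang q y` (`eq_opMat`). So `A = opMat p q x y s`, and it is a
contraction iff `‖c y + s t w‖_q ≤ ‖c x + t v‖_p` for all `c`, `t` (`Contr`), where
`v = tang p x` and `w = tang q y`. By strict convexity, a non-extreme `A` has `s` strictly between
two contractive parameters `s₁`, `s₂` for the same `(x, y)` (`exists_segment`).

**Stability.** `contr_eventually` says that if `s₀` is strictly between two contractive parameters
at `(x₀, y₀)`, then every `(x, y, s)` close to `(x₀, y₀, s₀)` with `x`, `y` unit vectors is
contractive. Away from `t = 0` the inequality at `s₀` is strict, so compactness applies. Near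
`t = 0` both sides are `1 + O(t²)`, with coefficients `s² Q_q(y)` and `Q_p(x)`, where
`Q_r(x) = (r - 1) / 2 * |x.1 * x.2| ^ (r - 2)` is infinite if `r < 2` and `x` is on an axis, and
zero if `r > 2` and `x` is on an axis. Contractivity at `s₁` and `s₂` gives
`s₁² Q_q(y₀), s₂² Q_q(y₀) ≤ Q_p(x₀)`, and `s₀²` is smaller than one of `s₁²`, `s₂²`. Hence
`s₀² Q_q(y₀) < Q_p(x₀)` unless both sides are zero or both are infinite, which is what the
hypothesis on `(p, q)` excludes (`exists_strict_coeffs`). The second-order estimates are uniform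
in the base point (`log_upper`, `log_lower`), so the inequality persists nearby.

**Conclusion.** Let extreme `S n` tend to `T`. Each `S n` attains norm one at a unit vector `x n`;
along a subsequence `x n → x₀`, and `T` attains norm one at `x₀`. The parameters of `S n` converge
to those of `T` at `x₀`. If `T` were not extreme, stability would allow shifting the parameter `s`
of `S n` in both directions, for large `n`, which contradicts the extremality of `S n`.
-/

noncomputable section

/-- The ℓ^r norm on ℝ². -/
def pnorm (r : ℝ) (z : ℝ × ℝ) : ℝ := (|z.1| ^ r + |z.2| ^ r) ^ (1 / r)

/-- Apply a 2×2 real matrix, viewed as a linear operator ℝ² → ℝ², to a vector. -/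
def app (A : Matrix (Fin 2) (Fin 2) ℝ) (z : ℝ × ℝ) : ℝ × ℝ :=
  (A 0 0 * z.1 + A 0 1 * z.2, A 1 0 * z.1 + A 1 1 * z.2)

/-- Operator norm from ℓ^p_2 to ℓ^q_2. -/
def opNorm (p q : ℝ) (A : Matrix (Fin 2) (Fin 2) ℝ) : ℝ :=
  sSup {c : ℝ | ∃ z : ℝ × ℝ, pnorm p z = 1 ∧ c = pnorm q (app A z)}

/-- Closed unit ball of L(ℓ^p_2, ℓ^q_2). -/
def unitBall (p q : ℝ) : Set (Matrix (Fin 2) (Fin 2) ℝ) := {A | opNorm p q A ≤ 1}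

/-- The rank-one operator u ⊗ v : z ↦ (u·z)·v. -/
def tensor (u v : ℝ × ℝ) : Matrix (Fin 2) (Fin 2) ℝ :=
  !![v.1 * u.1, v.1 * u.2; v.2 * u.1, v.2 * u.2]

/-- Signed power of a vector: (sgn z1 |z1|^r, sgn z2 |z2|^r). -/
def spow (z : ℝ × ℝ) (r : ℝ) : ℝ × ℝ :=
  (Real.sign z.1 * |z.1| ^ r, Real.sign z.2 * |z.2| ^ r)

/-- Rotation: z^o = (−z2, z1). -/
def rot (z : ℝ × ℝ) : ℝ × ℝ := (-z.2, z.1)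

open Filter Topology

/-! ### The function `|·|^r` and its second-order remainder -/

/-- The scalar duality map `a ↦ |a|^(r-2) a`, i.e. `1/r` times the derivative of `|a|^r`. -/
def sgnPow (r a : ℝ) : ℝ := |a| ^ (r - 2) * a

lemma sgnPow_mul_self {r : ℝ} (hr : 1 < r) (a : ℝ) : sgnPow r a * a = |a| ^ r := by
  unfold sgnPow
  rcases eq_or_ne a 0 with rfl | ha
  · simp [Real.zero_rpow (by linarith : r ≠ 0)]
  · have h : 0 < |a| := abs_pos.2 ha
    rw [mul_assoc, ← abs_mul_abs_self a, ← mul_assoc]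
    nth_rewrite 2 [← Real.rpow_one |a|]
    rw [← Real.rpow_add h]
    nth_rewrite 2 [← Real.rpow_one |a|]
    rw [← Real.rpow_add h]
    ring_nf

lemma sgnPow_neg (r a : ℝ) : sgnPow r (-a) = -sgnPow r a := by simp [sgnPow]

lemma sgnPow_zero (r : ℝ) : sgnPow r 0 = 0 := by simp [sgnPow]

lemma abs_sgnPow {r : ℝ} (hr : 1 < r) (a : ℝ) : |sgnPow r a| = |a| ^ (r - 1) := by
  rcases eq_or_ne a 0 with rfl | ha
  · simp [sgnPow_zero, Real.zero_rpow (by linarith : r - 1 ≠ 0)]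
  · have h : 0 < |a| := abs_pos.2 ha
    unfold sgnPow
    rw [abs_mul, abs_of_nonneg (Real.rpow_nonneg h.le _)]
    nth_rewrite 2 [← Real.rpow_one |a|]
    rw [← Real.rpow_add h]
    ring_nf

lemma hasDerivAt_abs_rpow' {r : ℝ} (hr : 1 < r) (a : ℝ) :
    HasDerivAt (fun x : ℝ => |x| ^ r) (r * sgnPow r a) a := by
  have := hasDerivAt_abs_rpow a hr
  rwa [mul_assoc] at this

lemma hasDerivAt_sgnPow {r a : ℝ} (ha : a ≠ 0) :
    HasDerivAt (sgnPow r) ((r - 1) * |a| ^ (r - 2)) a := by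
  have h : 0 < |a| := abs_pos.2 ha
  have h1 := ((hasDerivAt_abs ha).rpow_const (p := r - 2) (Or.inl h.ne')).mul (hasDerivAt_id a)
  refine h1.congr_deriv ?_
  have h2 : ((SignType.sign a : SignType) : ℝ) * a = |a| := sign_mul_self a
  have h3 : |a| ^ (r - 2) = |a| ^ (r - 2 - 1) * |a| := by
    nth_rewrite 3 [← Real.rpow_one |a|]
    rw [← Real.rpow_add h]
    ring_nf
  change ((SignType.sign a : SignType) : ℝ) * (r - 2) * |a| ^ (r - 2 - 1) * a + |a| ^ (r - 2) * 1 = _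
  have : ((SignType.sign a : SignType) : ℝ) * (r - 2) * |a| ^ (r - 2 - 1) * a
      = (r - 2) * |a| ^ (r - 2 - 1) * (((SignType.sign a : SignType) : ℝ) * a) := by ring
  rw [this, h2, mul_assoc, ← h3]
  ring

@[fun_prop]
lemma continuous_sgnPow {r : ℝ} (hr : 1 < r) : Continuous (sgnPow r) := by
  rw [continuous_iff_continuousAt]
  intro a
  rcases eq_or_ne a 0 with rfl | ha
  · have hc : Continuous fun x : ℝ => |x| ^ (r - 1) :=
      continuous_abs.rpow_const fun _ => Or.inr (by linarith)
    have h0 := hc.tendsto 0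
    simp only [abs_zero, Real.zero_rpow (by linarith : r - 1 ≠ 0)] at h0
    unfold ContinuousAt
    rw [sgnPow_zero]
    exact squeeze_zero_norm (fun x => by rw [Real.norm_eq_abs, abs_sgnPow hr]) h0
  · exact (hasDerivAt_sgnPow ha).continuousAt

lemma continuous_abs_rpow {r : ℝ} (hr : 1 < r) : Continuous fun x : ℝ => |x| ^ r :=
  continuous_abs.rpow_const fun _ => Or.inr (by linarith)

lemma strictConvexOn_abs_rpow {r : ℝ} (hr : 1 < r) :
    StrictConvexOn ℝ Set.univ fun x : ℝ => |x| ^ r := by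
  refine ⟨convex_univ, ?_⟩
  intro x _ y _ hxy a b ha hb hab
  simp only [smul_eq_mul]
  have hle : |a * x + b * y| ≤ a * |x| + b * |y| := by
    refine (abs_add_le _ _).trans ?_
    rw [abs_mul, abs_mul, abs_of_pos ha, abs_of_pos hb]
  have hr0 : 0 < r := by linarith
  by_cases h : |x| = |y|
  · have hxy' : x = -y := (abs_eq_abs.1 h).resolve_left hxy
    have hy : 0 < |y| := by
      apply abs_pos.2
      rintro rfl
      simp at hxy'
      exact hxy hxy'
    have hlt : |a * x + b * y| < |y| := by
      have : a * x + b * y = (b - a) * y := by rw [hxy']; ring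
      rw [this, abs_mul]
      have : |b - a| < 1 := by rw [abs_lt]; constructor <;> linarith
      nlinarith
    calc |a * x + b * y| ^ r < |y| ^ r := Real.rpow_lt_rpow (abs_nonneg _) hlt hr0
      _ = a * |x| ^ r + b * |y| ^ r := by rw [h, ← add_mul, hab, one_mul]
  · calc |a * x + b * y| ^ r ≤ (a * |x| + b * |y|) ^ r :=
          Real.rpow_le_rpow (abs_nonneg _) hle hr0.le
      _ < _ := (strictConvexOn_rpow hr).2 (abs_nonneg x) (abs_nonneg y) h ha hb hab

/-- The second-order remainder of `|·|^r` at `a`. -/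
def taylorRem (r a h : ℝ) : ℝ := |a + h| ^ r - |a| ^ r - r * sgnPow r a * h

/-- Integrating a bound `2 U ≥ f` (for `σ = 1`) or `2 U ≤ f` (for `σ = -1`) twice over an interval,
where `f` is the second derivative of `|·|^r`. It need not exist at `0`, so the bound is only assumed at
nonzero points, and monotonicity of the first derivative is glued at `0`. -/
lemma rem_bound_core {r : ℝ} (hr : 1 < r) {σ U a0 ρ : ℝ}
    (hb : ∀ b ∈ Metric.ball a0 ρ, b ≠ 0 → 0 ≤ σ * (2 * U - r * ((r - 1) * |b| ^ (r - 2))))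
    {a h : ℝ} (ha : a ∈ Metric.ball a0 ρ) (hah : a + h ∈ Metric.ball a0 ρ) :
    0 ≤ σ * (U * h ^ 2 - taylorRem r a h) := by
  set φ : ℝ → ℝ := fun b => σ * (2 * U * b - r * sgnPow r b) with hφ
  have hφc : Continuous φ := by
    have := continuous_sgnPow hr
    fun_prop
  have hφd : ∀ b, b ≠ 0 → HasDerivAt φ (σ * (2 * U - r * ((r - 1) * |b| ^ (r - 2)))) b := by
    intro b hb0
    have h1 := ((hasDerivAt_id b).const_mul (2 * U)).sub
      ((hasDerivAt_sgnPow (r := r) hb0).const_mul r)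
    simpa using h1.const_mul σ
  have hconv : Convex ℝ (Metric.ball a0 ρ) := convex_ball a0 ρ
  have piece : ∀ J : Set ℝ, Convex ℝ J → (∀ b ∈ interior J, b ≠ 0) →
      MonotoneOn φ (Metric.ball a0 ρ ∩ J) := by
    intro J hJ hJ0
    have hne : ∀ b ∈ interior (Metric.ball a0 ρ ∩ J), b ∈ Metric.ball a0 ρ ∧ b ≠ 0 := by
      intro b hb'
      rw [interior_inter] at hb'
      exact ⟨interior_subset hb'.1, hJ0 b hb'.2⟩
    apply monotoneOn_of_deriv_nonneg (hconv.inter hJ) hφc.continuousOn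
    · intro b hb'
      exact (hφd b (hne b hb').2).differentiableAt.differentiableWithinAt
    · intro b hb'
      rw [(hφd b (hne b hb').2).deriv]
      exact hb b (hne b hb').1 (hne b hb').2
  have m1 := piece (Set.Iic 0) (convex_Iic 0) (by
    intro b hb'; rw [interior_Iic] at hb'; exact ne_of_lt hb')
  have m2 := piece (Set.Ici 0) (convex_Ici 0) (by
    intro b hb'; rw [interior_Ici] at hb'; exact ne_of_gt hb')
  have hmono : MonotoneOn φ (Metric.ball a0 ρ) := by
    intro x hx y hy hxy
    rcases le_total y 0 with hy0 | hy0
    · exact m1 ⟨hx, hxy.trans hy0⟩ ⟨hy, hy0⟩ hxy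
    rcases le_total 0 x with hx0 | hx0
    · exact m2 ⟨hx, hx0⟩ ⟨hy, hy0⟩ hxy
    have h0 : (0 : ℝ) ∈ Metric.ball a0 ρ := hconv.ordConnected.out hx hy ⟨hx0, hy0⟩
    exact (m1 ⟨hx, hx0⟩ ⟨h0, Set.self_mem_Iic⟩ hx0).trans (m2 ⟨h0, Set.self_mem_Ici⟩ ⟨hy, hy0⟩ hy0)
  set ψ : ℝ → ℝ := fun b => σ * (U * b ^ 2 - |b| ^ r) with hψ
  have hψd : ∀ b, HasDerivAt ψ (φ b) b := by
    intro b
    have h1 := (((hasDerivAt_pow 2 b).const_mul U).sub (hasDerivAt_abs_rpow' hr b)).const_mul σ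
    refine h1.congr_deriv ?_
    simp only [hφ]
    push_cast
    ring
  have hψc : Continuous ψ := continuous_iff_continuousAt.2 fun b => (hψd b).continuousAt
  -- the graph of `ψ` lies above its tangent line at `a`
  have key : φ a * h ≤ ψ (a + h) - ψ a := by
    rcases lt_trichotomy h 0 with hh | rfl | hh
    · obtain ⟨c, hc, hce⟩ := exists_hasDerivAt_eq_slope ψ φ (by linarith : a + h < a)
        hψc.continuousOn (fun x _ => hψd x)
      have hcm : c ∈ Metric.ball a0 ρ := hconv.ordConnected.out hah ha ⟨hc.1.le, hc.2.le⟩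
      have := hmono hcm ha hc.2.le
      rw [hce, div_le_iff₀ (by linarith)] at this
      nlinarith
    · simp
    · obtain ⟨c, hc, hce⟩ := exists_hasDerivAt_eq_slope ψ φ (by linarith : a < a + h)
        hψc.continuousOn (fun x _ => hψd x)
      have hcm : c ∈ Metric.ball a0 ρ := hconv.ordConnected.out ha hah ⟨hc.1.le, hc.2.le⟩
      have := hmono ha hcm hc.1.le
      rw [hce, le_div_iff₀ (by linarith)] at this
      nlinarith
  have : σ * (U * h ^ 2 - taylorRem r a h) = ψ (a + h) - ψ a - φ a * h := by
    simp only [hψ, hφ, taylorRem]; ring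
  linarith

/-- Local form of `rem_bound_core`, uniform in the base point `w.1` near `a0`. -/
lemma rem_bound_eventually {r : ℝ} (hr : 1 < r) {σ U a0 : ℝ}
    (hb : ∀ᶠ b in 𝓝 a0, b ≠ 0 → 0 ≤ σ * (2 * U - r * ((r - 1) * |b| ^ (r - 2)))) :
    ∀ᶠ w : ℝ × ℝ in 𝓝 (a0, 0), 0 ≤ σ * (U * w.2 ^ 2 - taylorRem r w.1 w.2) := by
  obtain ⟨ρ, hρ, hb⟩ := Metric.eventually_nhds_iff_ball.1 hb
  have h1 : ∀ᶠ w : ℝ × ℝ in 𝓝 (a0, 0), w.1 ∈ Metric.ball a0 ρ :=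
    continuous_fst.continuousAt.eventually_mem (Metric.ball_mem_nhds _ hρ)
  have h2 : ∀ᶠ w : ℝ × ℝ in 𝓝 (a0, 0), w.1 + w.2 ∈ Metric.ball a0 ρ := by
    apply (continuous_fst.add continuous_snd).continuousAt.eventually_mem
    simpa using Metric.ball_mem_nhds _ hρ
  filter_upwards [h1, h2] with w hw1 hw2
  exact rem_bound_core hr hb hw1 hw2

lemma continuousAt_abs_rpow_sub {r a0 : ℝ} (h : 2 ≤ r ∨ a0 ≠ 0) :
    ContinuousAt (fun b : ℝ => r * ((r - 1) * |b| ^ (r - 2))) a0 := by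
  have : ContinuousAt (fun b : ℝ => |b| ^ (r - 2)) a0 := by
    apply continuous_abs.continuousAt.rpow_const
    rcases h with h | h
    · right; linarith
    · left; simpa using h
  fun_prop

lemma rem_le_eventually {r U a0 : ℝ} (hr : 1 < r) (h : 2 ≤ r ∨ a0 ≠ 0)
    (hU : r * ((r - 1) * |a0| ^ (r - 2)) < 2 * U) :
    ∀ᶠ w : ℝ × ℝ in 𝓝 (a0, 0), taylorRem r w.1 w.2 ≤ U * w.2 ^ 2 := by
  have := rem_bound_eventually (σ := 1) (U := U) (a0 := a0) hr (by
    filter_upwards [(continuousAt_abs_rpow_sub h).eventually_lt continuousAt_const hU] with b hb _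
    linarith)
  filter_upwards [this] with w hw
  linarith

lemma le_rem_eventually {r U a0 : ℝ} (hr : 1 < r)
    (h : (r < 2 ∧ a0 = 0) ∨ ((2 ≤ r ∨ a0 ≠ 0) ∧ 2 * U < r * ((r - 1) * |a0| ^ (r - 2)))) :
    ∀ᶠ w : ℝ × ℝ in 𝓝 (a0, 0), U * w.2 ^ 2 ≤ taylorRem r w.1 w.2 := by
  have := rem_bound_eventually (σ := -1) (U := U) (a0 := a0) hr (by
    rcases h with ⟨h1, rfl⟩ | ⟨h1, h2⟩
    · -- the second derivative of `|·|^r` blows up at `0`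
      have ht := tendsto_rpow_neg_nhdsGT_zero (y := r - 2) (by linarith)
      have ht2 : Tendsto (fun b : ℝ => |b|) (𝓝[≠] 0) (𝓝[>] 0) := tendsto_abs_nhdsNE_zero
      have h3 := (ht.comp ht2).eventually_ge_atTop (2 * U / (r * (r - 1)))
      rw [eventually_nhdsWithin_iff] at h3
      filter_upwards [h3] with b hb hb0
      have h4 := hb hb0
      have hpos : 0 < r * (r - 1) := by nlinarith
      rw [Function.comp, div_le_iff₀ hpos] at h4
      nlinarith
    · filter_upwards [continuousAt_const.eventually_lt (continuousAt_abs_rpow_sub h1) h2] with b hb _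
      linarith)
  filter_upwards [this] with w hw
  linarith

/-! ### Second-order expansion of the norm along tangent lines -/

/-- The `r`-th power of the `ℓ^r` norm. -/
def psum (r : ℝ) (z : ℝ × ℝ) : ℝ := |z.1| ^ r + |z.2| ^ r

/-- The direction annihilated by the norming functional `(sgnPow r x.1, sgnPow r x.2)` of `x`,
i.e. the tangent direction of the `ℓ^r` sphere at `x`. -/
def tang (r : ℝ) (x : ℝ × ℝ) : ℝ × ℝ := rot (sgnPow r x.1, sgnPow r x.2)

/-- The point `c x + t v`, where `v` is the tangent direction at `x`. -/
def comb (r : ℝ) (x : ℝ × ℝ) (c t : ℝ) : ℝ × ℝ :=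
  (c * x.1 + t * (tang r x).1, c * x.2 + t * (tang r x).2)

@[fun_prop]
lemma continuous_psum {r : ℝ} (hr : 1 < r) : Continuous (psum r) := by
  have := continuous_abs_rpow hr
  unfold psum
  exact (this.comp continuous_fst).add (this.comp continuous_snd)

lemma continuous_tang {r : ℝ} (hr : 1 < r) : Continuous (tang r) := by
  unfold tang rot
  fun_prop (disch := assumption)

lemma continuous_comb {r : ℝ} (hr : 1 < r) :
    Continuous fun w : (ℝ × ℝ) × ℝ × ℝ => comb r w.1 w.2.1 w.2.2 := by
  unfold comb
  fun_prop (disch := assumption)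

lemma psum_nonneg (r : ℝ) (z : ℝ × ℝ) : 0 ≤ psum r z := by
  unfold psum; positivity

/-- The linear terms cancel along the tangent direction. -/
lemma psum_comb_one {r : ℝ} {x : ℝ × ℝ} (hx : psum r x = 1) (t : ℝ) :
    psum r (comb r x 1 t) = 1 + taylorRem r x.1 (t * (tang r x).1) + taylorRem r x.2 (t * (tang r x).2) := by
  unfold psum at hx
  simp only [psum, comb, taylorRem, tang, rot, one_mul]
  linear_combination hx

/-- Half the second derivative at `t = 0` of `‖x + t v‖_r`, for `x` in the unit sphere. When
`r < 2` and `x` lies on a coordinate axis that derivative is infinite, and this is a junk value. -/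
def curv (r : ℝ) (x : ℝ × ℝ) : ℝ :=
  (r - 1) / 2 * (|x.1| ^ (r - 2) * (tang r x).1 ^ 2 + |x.2| ^ (r - 2) * (tang r x).2 ^ 2)

/-- Upper second-order bound `log ‖x + t v‖_r ≤ Λ t²` for small `t`, uniform in the unit vector `x`
near `x₀`, whenever `Λ` exceeds the finite second-order coefficient at `x₀`. -/
lemma log_upper {r Λ : ℝ} (hr : 1 < r) {x₀ : ℝ × ℝ} (hx₀ : psum r x₀ = 1)
    (h : 2 ≤ r ∨ (x₀.1 ≠ 0 ∧ x₀.2 ≠ 0)) (hΛ : curv r x₀ < Λ) :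
    ∀ᶠ w : (ℝ × ℝ) × ℝ in 𝓝 (x₀, 0), psum r w.1 = 1 → 0 < psum r (comb r w.1 1 w.2) ∧
      Real.log (psum r (comb r w.1 1 w.2)) / r ≤ Λ * w.2 ^ 2 := by
  have hr0 : 0 < r := by linarith
  set V := (tang r x₀).1 ^ 2 + (tang r x₀).2 ^ 2 with hV
  have hV0 : 0 ≤ V := by positivity
  set ε := r * (Λ - curv r x₀) / (V + 1) with hε
  have hε0 : 0 < ε := div_pos (mul_pos hr0 (by linarith)) (by linarith)
  have hεV : ε * (V + 1) = r * (Λ - curv r x₀) := div_mul_cancel₀ _ (by linarith)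
  set U₁ := r * ((r - 1) * |x₀.1| ^ (r - 2)) / 2 + ε with hU₁
  set U₂ := r * ((r - 1) * |x₀.2| ^ (r - 2)) / 2 + ε with hU₂
  have e1 := rem_le_eventually (r := r) (U := U₁) (a0 := x₀.1) hr (h.imp id And.left)
    (by linarith)
  have e2 := rem_le_eventually (r := r) (U := U₂) (a0 := x₀.2) hr (h.imp id And.right)
    (by linarith)
  have t1 : Tendsto (fun w : (ℝ × ℝ) × ℝ => (w.1.1, w.2 * (tang r w.1).1)) (𝓝 (x₀, 0))
      (𝓝 (x₀.1, 0)) := by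
    have : Continuous (fun w : (ℝ × ℝ) × ℝ => (w.1.1, w.2 * (tang r w.1).1)) := by fun_prop (disch := assumption)
    simpa using this.tendsto (x₀, 0)
  have t2 : Tendsto (fun w : (ℝ × ℝ) × ℝ => (w.1.2, w.2 * (tang r w.1).2)) (𝓝 (x₀, 0))
      (𝓝 (x₀.2, 0)) := by
    have : Continuous (fun w : (ℝ × ℝ) × ℝ => (w.1.2, w.2 * (tang r w.1).2)) := by fun_prop (disch := assumption)
    simpa using this.tendsto (x₀, 0)
  have e3 : ∀ᶠ w : (ℝ × ℝ) × ℝ in 𝓝 (x₀, 0),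
      U₁ * (tang r w.1).1 ^ 2 + U₂ * (tang r w.1).2 ^ 2 < r * Λ := by
    have hc : Continuous fun w : (ℝ × ℝ) × ℝ =>
      U₁ * (tang r w.1).1 ^ 2 + U₂ * (tang r w.1).2 ^ 2 := by fun_prop (disch := assumption)
    apply hc.continuousAt.eventually_lt continuousAt_const
    have : U₁ * (tang r x₀).1 ^ 2 + U₂ * (tang r x₀).2 ^ 2 = r * curv r x₀ + ε * V := by
      simp only [hU₁, hU₂, curv, hV]; ring
    simp only [this]
    nlinarith
  have e4 : ∀ᶠ w : (ℝ × ℝ) × ℝ in 𝓝 (x₀, 0), 0 < psum r (comb r w.1 1 w.2) := by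
    have hc : Continuous fun w : (ℝ × ℝ) × ℝ => psum r (comb r w.1 1 w.2) :=
      (continuous_psum hr).comp ((continuous_comb hr).comp
        (continuous_fst.prodMk (continuous_const.prodMk continuous_snd)))
    apply continuousAt_const.eventually_lt hc.continuousAt
    have : psum r (comb r x₀ 1 0) = 1 := by simp [comb, hx₀]
    simp [this]
  filter_upwards [t1.eventually e1, t2.eventually e2, e3, e4] with w h1 h2 h3 h4 hw
  refine ⟨h4, ?_⟩
  rw [div_le_iff₀ hr0]
  refine (Real.log_le_sub_one_of_pos h4).trans ?_
  rw [psum_comb_one hw]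
  have : (U₁ * (tang r w.1).1 ^ 2 + U₂ * (tang r w.1).2 ^ 2) * w.2 ^ 2 ≤ r * Λ * w.2 ^ 2 :=
    mul_le_mul_of_nonneg_right h3.le (sq_nonneg _)
  linarith

/-- Lower second-order bound for `log ‖x + t v‖_r`, from bounds on the two coordinates. -/
lemma log_lower_core {r Λ L₁ L₂ : ℝ} (hr : 1 < r) {x₀ : ℝ × ℝ} (hx₀ : psum r x₀ = 1)
    (e1 : ∀ᶠ w : ℝ × ℝ in 𝓝 (x₀.1, 0), L₁ * w.2 ^ 2 ≤ taylorRem r w.1 w.2)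
    (e2 : ∀ᶠ w : ℝ × ℝ in 𝓝 (x₀.2, 0), L₂ * w.2 ^ 2 ≤ taylorRem r w.1 w.2)
    (hL : r * Λ < L₁ * (tang r x₀).1 ^ 2 + L₂ * (tang r x₀).2 ^ 2) :
    ∀ᶠ w : (ℝ × ℝ) × ℝ in 𝓝 (x₀, 0), psum r w.1 = 1 → 0 < psum r (comb r w.1 1 w.2) ∧
      Λ * w.2 ^ 2 ≤ Real.log (psum r (comb r w.1 1 w.2)) / r := by
  have hr0 : 0 < r := by linarith
  have t1 : Tendsto (fun w : (ℝ × ℝ) × ℝ => (w.1.1, w.2 * (tang r w.1).1)) (𝓝 (x₀, 0))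
      (𝓝 (x₀.1, 0)) := by
    have : Continuous (fun w : (ℝ × ℝ) × ℝ => (w.1.1, w.2 * (tang r w.1).1)) := by fun_prop (disch := assumption)
    simpa using this.tendsto (x₀, 0)
  have t2 : Tendsto (fun w : (ℝ × ℝ) × ℝ => (w.1.2, w.2 * (tang r w.1).2)) (𝓝 (x₀, 0))
      (𝓝 (x₀.2, 0)) := by
    have : Continuous (fun w : (ℝ × ℝ) × ℝ => (w.1.2, w.2 * (tang r w.1).2)) := by fun_prop (disch := assumption)
    simpa using this.tendsto (x₀, 0)
  have hc : Continuous fun w : (ℝ × ℝ) × ℝ => psum r (comb r w.1 1 w.2) :=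
    (continuous_psum hr).comp ((continuous_comb hr).comp
      (continuous_fst.prodMk (continuous_const.prodMk continuous_snd)))
  have h0 : psum r (comb r x₀ 1 0) = 1 := by simp [comb, hx₀]
  have e3 : ∀ᶠ w : (ℝ × ℝ) × ℝ in 𝓝 (x₀, 0),
      r * Λ * psum r (comb r w.1 1 w.2)
        < L₁ * (tang r w.1).1 ^ 2 + L₂ * (tang r w.1).2 ^ 2 := by
    have hc2 : Continuous fun w : (ℝ × ℝ) × ℝ =>
      L₁ * (tang r w.1).1 ^ 2 + L₂ * (tang r w.1).2 ^ 2 := by fun_prop (disch := assumption)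
    apply (continuous_const.mul hc).continuousAt.eventually_lt hc2.continuousAt
    simpa [h0] using hL
  have e4 : ∀ᶠ w : (ℝ × ℝ) × ℝ in 𝓝 (x₀, 0), 0 < psum r (comb r w.1 1 w.2) := by
    apply continuousAt_const.eventually_lt hc.continuousAt
    simp [h0]
  filter_upwards [t1.eventually e1, t2.eventually e2, e3, e4] with w h1 h2 h3 h4 hw
  refine ⟨h4, ?_⟩
  rw [le_div_iff₀ hr0]
  refine le_trans ?_ (Real.one_sub_inv_le_log_of_pos h4)
  have h5 := mul_le_mul_of_nonneg_right h3.le (sq_nonneg w.2)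
  have h6 := psum_comb_one hw w.2
  set g := psum r (comb r w.1 1 w.2)
  have h7 : 1 - g⁻¹ = (g - 1) / g := by field_simp
  rw [h7, le_div_iff₀ h4]
  linarith

lemma sgnPow_sq_of_axis {r a b : ℝ} (hr : 1 < r) (h : |a| ^ r + |b| ^ r = 1) (ha : a = 0) :
    sgnPow r b ^ 2 = 1 ∧ b ≠ 0 := by
  have hr0 : 0 < r := by linarith
  subst ha
  rw [abs_zero, Real.zero_rpow hr0.ne', zero_add] at h
  have hb : |b| = 1 := by
    rw [← Real.rpow_rpow_inv (abs_nonneg b) hr0.ne', h, Real.one_rpow]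
  refine ⟨?_, ?_⟩
  · rw [← sq_abs, abs_sgnPow hr, hb, Real.one_rpow, one_pow]
  · rintro rfl
    simp at hb

/-- Lower second-order bound `Λ t² ≤ log ‖x + t v‖_r` for small `t`, uniform in the unit vector `x`
near `x₀`. If `r < 2` and `x₀` is on an axis, then the coefficient is infinite and any `Λ` works. -/
lemma log_lower {r Λ : ℝ} (hr : 1 < r) {x₀ : ℝ × ℝ} (hx₀ : psum r x₀ = 1)
    (h : (r < 2 ∧ (x₀.1 = 0 ∨ x₀.2 = 0)) ∨
      ((2 ≤ r ∨ (x₀.1 ≠ 0 ∧ x₀.2 ≠ 0)) ∧ Λ < curv r x₀)) :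
    ∀ᶠ w : (ℝ × ℝ) × ℝ in 𝓝 (x₀, 0), psum r w.1 = 1 → 0 < psum r (comb r w.1 1 w.2) ∧
      Λ * w.2 ^ 2 ≤ Real.log (psum r (comb r w.1 1 w.2)) / r := by
  have hr0 : 0 < r := by linarith
  rcases h with ⟨hr2, h1 | h1⟩ | ⟨h1, hΛ⟩
  · -- the tangent direction is the vanishing coordinate, where the coefficient is arbitrary
    obtain ⟨h3, h4⟩ := sgnPow_sq_of_axis hr hx₀ h1
    refine log_lower_core (L₁ := r * Λ + 1)
      (L₂ := r * ((r - 1) * |x₀.2| ^ (r - 2)) / 2 - 1) hr hx₀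
      (le_rem_eventually hr (Or.inl ⟨hr2, h1⟩))
      (le_rem_eventually hr (Or.inr ⟨Or.inr h4, by linarith⟩)) ?_
    simp [tang, rot, h1, sgnPow_zero, h3]
  · obtain ⟨h3, h4⟩ := sgnPow_sq_of_axis hr ((add_comm _ _).trans hx₀) h1
    refine log_lower_core (L₂ := r * Λ + 1)
      (L₁ := r * ((r - 1) * |x₀.1| ^ (r - 2)) / 2 - 1) hr hx₀
      (le_rem_eventually hr (Or.inr ⟨Or.inr h4, by linarith⟩))
      (le_rem_eventually hr (Or.inl ⟨hr2, h1⟩)) ?_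
    simp [tang, rot, h1, sgnPow_zero, h3]
  · set V := (tang r x₀).1 ^ 2 + (tang r x₀).2 ^ 2 with hV
    have hV0 : 0 ≤ V := by positivity
    set ε := r * (curv r x₀ - Λ) / (V + 1) with hε
    have hε0 : 0 < ε := div_pos (mul_pos hr0 (by linarith)) (by linarith)
    have hεV : ε * (V + 1) = r * (curv r x₀ - Λ) := div_mul_cancel₀ _ (by linarith)
    refine log_lower_core (L₁ := r * ((r - 1) * |x₀.1| ^ (r - 2)) / 2 - ε)
      (L₂ := r * ((r - 1) * |x₀.2| ^ (r - 2)) / 2 - ε) hr hx₀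
      (le_rem_eventually hr (Or.inr ⟨h1.imp id And.left, by linarith⟩))
      (le_rem_eventually hr (Or.inr ⟨h1.imp id And.right, by linarith⟩)) ?_
    have : (r * ((r - 1) * |x₀.1| ^ (r - 2)) / 2 - ε) * (tang r x₀).1 ^ 2
        + (r * ((r - 1) * |x₀.2| ^ (r - 2)) / 2 - ε) * (tang r x₀).2 ^ 2
        = r * curv r x₀ - ε * V := by
      simp only [curv, hV]; ring
    rw [this]
    nlinarith

lemma curv_nonneg {r : ℝ} (hr : 1 < r) (x : ℝ × ℝ) : 0 ≤ curv r x := by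
  unfold curv
  have : 0 < r - 1 := by linarith
  positivity

lemma curv_pos {r : ℝ} (hr : 1 < r) {x : ℝ × ℝ} (hx : psum r x = 1)
    (h : r = 2 ∨ (x.1 ≠ 0 ∧ x.2 ≠ 0)) : 0 < curv r x := by
  have hr1 : 0 < r - 1 := by linarith
  unfold curv
  rcases h with rfl | ⟨h1, h2⟩
  · simp only [psum, Real.rpow_two, sq_abs] at hx
    simp only [tang, rot, sgnPow, sub_self, Real.rpow_zero, one_mul]
    nlinarith
  · have h1' := abs_pos.2 h1
    have h2' := abs_pos.2 h2
    have h3 : (tang r x).1 ≠ 0 := by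
      simp only [tang, rot, sgnPow]
      exact neg_ne_zero.2 (mul_ne_zero (Real.rpow_pos_of_pos h2' _).ne' h2)
    positivity

/-! ### Stability of contractivity under perturbation -/

lemma pnorm_eq (r : ℝ) (z : ℝ × ℝ) : pnorm r z = psum r z ^ (1 / r) := rfl

@[fun_prop]
lemma continuous_pnorm {r : ℝ} (hr : 1 < r) : Continuous (pnorm r) :=
  (continuous_psum hr).rpow_const fun _ => Or.inr (by positivity)

lemma pnorm_nonneg (r : ℝ) (z : ℝ × ℝ) : 0 ≤ pnorm r z := Real.rpow_nonneg (psum_nonneg r z) _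

lemma pnorm_rpow {r : ℝ} (hr : 1 < r) (z : ℝ × ℝ) : pnorm r z ^ r = psum r z := by
  rw [pnorm_eq, one_div, Real.rpow_inv_rpow (psum_nonneg r z) (by linarith)]

lemma pnorm_eq_one {r : ℝ} (hr : 1 < r) {z : ℝ × ℝ} : pnorm r z = 1 ↔ psum r z = 1 := by
  constructor
  · intro h
    rw [← pnorm_rpow hr, h, Real.one_rpow]
  · intro h
    rw [pnorm_eq, h, Real.one_rpow]

lemma pnorm_smul {r : ℝ} (hr : 1 < r) (k : ℝ) (z : ℝ × ℝ) :
    pnorm r (k • z) = |k| * pnorm r z := by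
  have h : psum r (k • z) = |k| ^ r * psum r z := by
    simp only [psum, Prod.smul_fst, Prod.smul_snd, smul_eq_mul, abs_mul]
    rw [Real.mul_rpow (abs_nonneg _) (abs_nonneg _), Real.mul_rpow (abs_nonneg _) (abs_nonneg _)]
    ring
  rw [pnorm_eq, pnorm_eq, h, Real.mul_rpow (by positivity) (psum_nonneg _ _), one_div,
    Real.rpow_rpow_inv (abs_nonneg _) (by linarith)]

lemma pnorm_pos {r : ℝ} {z : ℝ × ℝ} (hz : z ≠ 0) : 0 < pnorm r z := by
  apply Real.rpow_pos_of_pos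
  by_cases h : z.1 = 0
  · have h2 : z.2 ≠ 0 := fun h2 => hz (Prod.ext h h2)
    have := abs_pos.2 h2
    positivity
  · have := abs_pos.2 h
    positivity

lemma psum_zero {r : ℝ} (hr : 1 < r) : psum r 0 = 0 := by
  simp [psum, Real.zero_rpow (by linarith : r ≠ 0)]

/-- Strict convexity of the `ℓ^r` balls. -/
lemma pnorm_strict {r N α β : ℝ} (hr : 1 < r) {z w : ℝ × ℝ} (hz : pnorm r z ≤ N)
    (hw : pnorm r w ≤ N) (hzw : z ≠ w) (hα : 0 < α) (hβ : 0 < β) (hαβ : α + β = 1) :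
    pnorm r (α • z + β • w) < N := by
  have hr0 : 0 < r := by linarith
  have hN : 0 ≤ N := (pnorm_nonneg r z).trans hz
  have hz' : psum r z ≤ N ^ r := by
    rw [← pnorm_rpow hr]
    exact Real.rpow_le_rpow (pnorm_nonneg _ _) hz hr0.le
  have hw' : psum r w ≤ N ^ r := by
    rw [← pnorm_rpow hr]
    exact Real.rpow_le_rpow (pnorm_nonneg _ _) hw hr0.le
  have hs := strictConvexOn_abs_rpow hr
  have hlt : psum r (α • z + β • w) < α * psum r z + β * psum r w := by
    have c1 := hs.convexOn.2 (Set.mem_univ z.1) (Set.mem_univ w.1) hα.le hβ.le hαβ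
    have c2 := hs.convexOn.2 (Set.mem_univ z.2) (Set.mem_univ w.2) hα.le hβ.le hαβ
    simp only [smul_eq_mul] at c1 c2
    simp only [psum, Prod.fst_add, Prod.snd_add, Prod.smul_fst, Prod.smul_snd, smul_eq_mul]
    by_cases h : z.1 = w.1
    · have h2 : z.2 ≠ w.2 := fun h2 => hzw (Prod.ext h h2)
      have c3 := hs.2 (Set.mem_univ z.2) (Set.mem_univ w.2) h2 hα hβ hαβ
      simp only [smul_eq_mul] at c3
      linarith
    · have c3 := hs.2 (Set.mem_univ z.1) (Set.mem_univ w.1) h hα hβ hαβ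
      simp only [smul_eq_mul] at c3
      linarith
  have hle : psum r (α • z + β • w) < N ^ r := by
    have : α * N ^ r + β * N ^ r = N ^ r := by rw [← add_mul, hαβ, one_mul]
    nlinarith
  rw [← pnorm_rpow hr] at hle
  exact lt_of_not_ge fun h => not_le_of_gt hle (Real.rpow_le_rpow hN h hr0.le)

/-- For unit vectors `x`, `y`, this says that the operator sending `x` to `y` and the tangent
direction at `x` to `s` times the tangent direction at `y` is a contraction. -/
def Contr (p q : ℝ) (x y : ℝ × ℝ) (s : ℝ) : Prop :=
  ∀ c t : ℝ, pnorm q (comb q y c (s * t)) ≤ pnorm p (comb p x c t)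

/-- `rot x` is the functional that vanishes at `x` and is `1` at the tangent direction. -/
lemma rot_tang {r : ℝ} (hr : 1 < r) {x : ℝ × ℝ} (hx : psum r x = 1) :
    (rot x).1 * (tang r x).1 + (rot x).2 * (tang r x).2 = 1 := by
  rw [← hx, psum, ← sgnPow_mul_self hr, ← sgnPow_mul_self hr]
  simp only [rot, tang]
  ring

lemma log_le_of_pnorm_le {p q : ℝ} {z w : ℝ × ℝ} (hz : 0 < psum q z) (hw : 0 < psum p w) :
    pnorm q z ≤ pnorm p w ↔ Real.log (psum q z) / q ≤ Real.log (psum p w) / p := by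
  rw [pnorm_eq, pnorm_eq, Real.rpow_def_of_pos hz, Real.rpow_def_of_pos hw, Real.exp_le_exp]
  ring_nf

lemma tendsto_slice {x₀ : ℝ × ℝ} (s : ℝ) :
    Tendsto (fun t : ℝ => (x₀, s * t)) (𝓝 0) (𝓝 (x₀, 0)) := by
  have : Continuous fun t : ℝ => (x₀, s * t) := by fun_prop
  simpa using this.tendsto 0

/-- Second-order necessary condition for contractivity. -/
lemma contr_second_order {p q s Λx Λy : ℝ} {x₀ y₀ : ℝ × ℝ} (hx₀ : psum p x₀ = 1)
    (hy₀ : psum q y₀ = 1) (hs : Contr p q x₀ y₀ s)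
    (hup : ∀ᶠ w : (ℝ × ℝ) × ℝ in 𝓝 (x₀, 0), psum p w.1 = 1 → 0 < psum p (comb p w.1 1 w.2) ∧
      Real.log (psum p (comb p w.1 1 w.2)) / p ≤ Λx * w.2 ^ 2)
    (hlow : ∀ᶠ w : (ℝ × ℝ) × ℝ in 𝓝 (y₀, 0), psum q w.1 = 1 → 0 < psum q (comb q w.1 1 w.2) ∧
      Λy * w.2 ^ 2 ≤ Real.log (psum q (comb q w.1 1 w.2)) / q) :
    Λy * s ^ 2 ≤ Λx := by
  have h1 := (tendsto_slice (x₀ := x₀) 1).eventually hup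
  have h2 := (tendsto_slice (x₀ := y₀) s).eventually hlow
  have h3 := (h1.and h2).filter_mono (nhdsWithin_le_nhds (s := {0}ᶜ))
  obtain ⟨t, ⟨ht1, ht2⟩, ht0⟩ := (h3.and self_mem_nhdsWithin).exists
  obtain ⟨a1, a2⟩ := ht1 hx₀
  obtain ⟨b1, b2⟩ := ht2 hy₀
  simp only [one_mul] at a1 a2 b1 b2
  have := (log_le_of_pnorm_le b1 a1).1 (hs 1 t)
  have ht : 0 < t ^ 2 := by
    have : t ≠ 0 := ht0
    positivity
  have : (Λy * s ^ 2) * t ^ 2 ≤ Λx * t ^ 2 := by nlinarith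
  exact le_of_mul_le_mul_right this ht

/-- The inequality of second-order coefficients at a non-extreme contraction is strict. This is
where the restriction on `(p, q)` enters: it rules out both coefficients vanishing and both being
infinite. -/
lemma exists_strict_coeffs {p q s₀ s₁ : ℝ} (hp : 1 < p) (hq : 1 < q)
    (hpq : p = 2 ∨ q = 2 ∨ (q < 2 ∧ 2 < p)) {x₀ y₀ : ℝ × ℝ} (hx₀ : psum p x₀ = 1)
    (hy₀ : psum q y₀ = 1) (h₁ : Contr p q x₀ y₀ s₁) (hs : s₀ ^ 2 < s₁ ^ 2) :
    ∃ Λx Λy, s₀ ^ 2 * Λy < Λx ∧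
      (∀ᶠ w : (ℝ × ℝ) × ℝ in 𝓝 (x₀, 0), psum p w.1 = 1 → 0 < psum p (comb p w.1 1 w.2) ∧
        Λx * w.2 ^ 2 ≤ Real.log (psum p (comb p w.1 1 w.2)) / p) ∧
      (∀ᶠ w : (ℝ × ℝ) × ℝ in 𝓝 (y₀, 0), psum q w.1 = 1 → 0 < psum q (comb q w.1 1 w.2) ∧
        Real.log (psum q (comb q w.1 1 w.2)) / q ≤ Λy * w.2 ^ 2) := by
  have hs1 : 0 < s₁ ^ 2 := (sq_nonneg s₀).trans_lt hs
  have hs1' : s₁ ≠ 0 := pow_ne_zero_iff two_ne_zero |>.1 hs1.ne'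
  by_cases hy : 2 ≤ q ∨ (y₀.1 ≠ 0 ∧ y₀.2 ≠ 0)
  · by_cases hx : 2 ≤ p ∨ (x₀.1 ≠ 0 ∧ x₀.2 ≠ 0)
    · have hQ : curv q y₀ * s₁ ^ 2 ≤ curv p x₀ := by
        by_contra! hlt
        set D := curv q y₀ * s₁ ^ 2 - curv p x₀ with hD
        have hD0 : 0 < D := by linarith
        have hd : 0 < D / (3 * s₁ ^ 2) := by positivity
        have := contr_second_order (Λx := curv p x₀ + D / 3)
          (Λy := curv q y₀ - D / (3 * s₁ ^ 2)) hx₀ hy₀ h₁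
          (log_upper hp hx₀ hx (by linarith))
          (log_lower hq hy₀ (Or.inr ⟨hy, by linarith⟩))
        have e : D / (3 * s₁ ^ 2) * s₁ ^ 2 = D / 3 := by field_simp
        nlinarith
      -- if `curv q y₀ = 0` then `2 < q`, hence `p = 2` and `curv p x₀` is positive
      have hlt : s₀ ^ 2 * curv q y₀ < curv p x₀ := by
        rcases (curv_nonneg hq y₀).lt_or_eq with h0 | h0
        · nlinarith
        · rw [← h0, mul_zero]
          apply curv_pos hp hx₀
          left
          have hq2 : ¬ (q = 2 ∨ (y₀.1 ≠ 0 ∧ y₀.2 ≠ 0)) := fun h =>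
            (curv_pos hq hy₀ h).ne h0
          rcases hpq with h | h | h
          · exact h
          · exact absurd (Or.inl h) hq2
          · rcases hy with hy | hy
            · linarith
            · exact absurd (Or.inr hy) hq2
      set D := curv p x₀ - s₀ ^ 2 * curv q y₀ with hD
      have hD0 : 0 < D := by linarith
      have hd : 0 < D / (3 * s₁ ^ 2) := by positivity
      refine ⟨curv p x₀ - D / 3, curv q y₀ + D / (3 * s₁ ^ 2), ?_,
        log_lower hp hx₀ (Or.inr ⟨hx, by linarith⟩), log_upper hq hy₀ hy (by linarith)⟩
      have e : D / (3 * s₁ ^ 2) * s₁ ^ 2 = D / 3 := by field_simp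
      nlinarith
    · -- here `p < 2`, so `q = 2`, and the coefficient at `x₀` is infinite
      push Not at hx
      refine ⟨s₀ ^ 2 * (curv q y₀ + 1) + 1, curv q y₀ + 1, by linarith,
        log_lower hp hx₀ (Or.inl ⟨hx.1, ?_⟩), log_upper hq hy₀ hy (by linarith)⟩
      by_cases h : x₀.1 = 0
      · exact Or.inl h
      · exact Or.inr (hx.2 h)
  · -- an infinite coefficient at `y₀` cannot be dominated by the finite one at `x₀`
    exfalso
    push Not at hy
    have hx : 2 ≤ p := by
      rcases hpq with h | h | h
      · exact h.ge
      · linarith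
      · exact h.2.le
    have hy' : y₀.1 = 0 ∨ y₀.2 = 0 := by
      by_cases h : y₀.1 = 0
      · exact Or.inl h
      · exact Or.inr (hy.2 h)
    have := contr_second_order (Λx := curv p x₀ + 1) (Λy := (curv p x₀ + 2) / s₁ ^ 2) hx₀ hy₀ h₁
      (log_upper hp hx₀ (Or.inl hx) (by linarith)) (log_lower hq hy₀ (Or.inl ⟨hy.1, hy'⟩))
    rw [div_mul_cancel₀ _ hs1.ne'] at this
    linarith

lemma comb_smul (r : ℝ) (x : ℝ × ℝ) (k c t : ℝ) : comb r x (k * c) (k * t) = k • comb r x c t := by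
  ext <;> simp [comb] <;> ring

/-- Away from `t = 0`, contractivity at a proper convex combination of parameters is strict. -/
lemma contr_strict {p q s₀ s₁ s₂ α β : ℝ} (hq : 1 < q)
    {x₀ y₀ : ℝ × ℝ} (hy₀ : psum q y₀ = 1) (h₁ : Contr p q x₀ y₀ s₁) (h₂ : Contr p q x₀ y₀ s₂)
    (hs : s₁ ≠ s₂) (hα : 0 < α) (hβ : 0 < β) (hαβ : α + β = 1) (hs₀ : s₀ = α * s₁ + β * s₂)
    {c t : ℝ} (ht : t ≠ 0) :
    pnorm q (comb q y₀ c (s₀ * t)) < pnorm p (comb p x₀ c t) := by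
  have hne : comb q y₀ c (s₁ * t) ≠ comb q y₀ c (s₂ * t) := by
    intro h
    have e1 := congrArg Prod.fst h
    have e2 := congrArg Prod.snd h
    simp only [comb] at e1 e2
    have e3 := rot_tang hq hy₀
    have : (s₁ - s₂) * t = 0 := by
      linear_combination (rot y₀).1 * e1 + (rot y₀).2 * e2 - (s₁ - s₂) * t * e3
    rcases mul_eq_zero.1 this with h | h
    · exact hs (sub_eq_zero.1 h)
    · exact ht h
  have := pnorm_strict hq (h₁ c t) (h₂ c t) hne hα hβ hαβ
  convert this using 2
  ext
  · simp only [comb, hs₀, Prod.fst_add, Prod.smul_fst, smul_eq_mul]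
    linear_combination -c * y₀.1 * hαβ
  · simp only [comb, hs₀, Prod.snd_add, Prod.smul_snd, smul_eq_mul]
    linear_combination -c * y₀.2 * hαβ

/-- If `s₀` lies strictly between two contractive parameters at `(x₀, y₀)`, then all nearby
parameters, at nearby base points, are contractive. -/
lemma contr_eventually {p q s₀ s₁ s₂ α β : ℝ} (hp : 1 < p) (hq : 1 < q)
    (hpq : p = 2 ∨ q = 2 ∨ (q < 2 ∧ 2 < p)) {x₀ y₀ : ℝ × ℝ} (hx₀ : psum p x₀ = 1)
    (hy₀ : psum q y₀ = 1) (h₁ : Contr p q x₀ y₀ s₁) (h₂ : Contr p q x₀ y₀ s₂)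
    (hs : s₁ ≠ s₂) (hα : 0 < α) (hβ : 0 < β) (hαβ : α + β = 1) (hs₀ : s₀ = α * s₁ + β * s₂) :
    ∀ᶠ P : (ℝ × ℝ) × (ℝ × ℝ) × ℝ in 𝓝 (x₀, y₀, s₀),
      psum p P.1 = 1 → psum q P.2.1 = 1 → Contr p q P.1 P.2.1 P.2.2 := by
  -- the region `|t| ≤ η |c|`, from the second-order expansions
  have hlocal : ∀ᶠ w : ((ℝ × ℝ) × (ℝ × ℝ) × ℝ) × ℝ in 𝓝 ((x₀, y₀, s₀), 0),
      psum p w.1.1 = 1 → psum q w.1.2.1 = 1 →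
      pnorm q (comb q w.1.2.1 1 (w.1.2.2 * w.2)) ≤ pnorm p (comb p w.1.1 1 w.2) := by
    obtain ⟨Λx, Λy, hΛ, hlow, hup⟩ : ∃ Λx Λy, s₀ ^ 2 * Λy < Λx ∧
        (∀ᶠ w : (ℝ × ℝ) × ℝ in 𝓝 (x₀, 0), psum p w.1 = 1 → 0 < psum p (comb p w.1 1 w.2) ∧
          Λx * w.2 ^ 2 ≤ Real.log (psum p (comb p w.1 1 w.2)) / p) ∧
        (∀ᶠ w : (ℝ × ℝ) × ℝ in 𝓝 (y₀, 0), psum q w.1 = 1 → 0 < psum q (comb q w.1 1 w.2) ∧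
          Real.log (psum q (comb q w.1 1 w.2)) / q ≤ Λy * w.2 ^ 2) := by
      have hsq : s₀ ^ 2 < s₁ ^ 2 ∨ s₀ ^ 2 < s₂ ^ 2 := by
        by_contra! h
        have h3 : 0 < (s₁ - s₂) ^ 2 := by
          have := sub_ne_zero.2 hs
          positivity
        have h4 : α * s₁ ^ 2 + β * s₂ ^ 2 - s₀ ^ 2 = α * β * (s₁ - s₂) ^ 2 := by
          rw [hs₀, show β = 1 - α by linarith]; ring
        have h5 : 0 < α * β * (s₁ - s₂) ^ 2 := by positivity
        nlinarith
      rcases hsq with h | h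
      · exact exists_strict_coeffs hp hq hpq hx₀ hy₀ h₁ h
      · exact exists_strict_coeffs hp hq hpq hx₀ hy₀ h₂ h
    have tx : Tendsto (fun w : ((ℝ × ℝ) × (ℝ × ℝ) × ℝ) × ℝ => (w.1.1, w.2))
        (𝓝 ((x₀, y₀, s₀), 0)) (𝓝 (x₀, 0)) := by
      have : Continuous fun w : ((ℝ × ℝ) × (ℝ × ℝ) × ℝ) × ℝ => (w.1.1, w.2) := by fun_prop
      exact this.tendsto ((x₀, y₀, s₀), 0)
    have ty : Tendsto (fun w : ((ℝ × ℝ) × (ℝ × ℝ) × ℝ) × ℝ => (w.1.2.1, w.1.2.2 * w.2))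
        (𝓝 ((x₀, y₀, s₀), 0)) (𝓝 (y₀, 0)) := by
      have : Continuous fun w : ((ℝ × ℝ) × (ℝ × ℝ) × ℝ) × ℝ => (w.1.2.1, w.1.2.2 * w.2) := by
        fun_prop
      simpa using this.tendsto ((x₀, y₀, s₀), 0)
    have ts : ∀ᶠ w : ((ℝ × ℝ) × (ℝ × ℝ) × ℝ) × ℝ in 𝓝 ((x₀, y₀, s₀), 0),
        w.1.2.2 ^ 2 * Λy < Λx := by
      have : Continuous fun w : ((ℝ × ℝ) × (ℝ × ℝ) × ℝ) × ℝ => w.1.2.2 ^ 2 * Λy := by fun_prop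
      exact this.continuousAt.eventually_lt continuousAt_const hΛ
    filter_upwards [tx.eventually hlow, ty.eventually hup, ts] with w a b c hwx hwy
    obtain ⟨a1, a2⟩ := a hwx
    obtain ⟨b1, b2⟩ := b hwy
    rw [log_le_of_pnorm_le b1 a1]
    refine b2.trans (le_trans ?_ a2)
    nlinarith [sq_nonneg w.2]
  rw [nhds_prod_eq, eventually_prod_iff] at hlocal
  obtain ⟨pa, hpa, pb, hpb, hab⟩ := hlocal
  obtain ⟨η, hη, hpb⟩ := Metric.eventually_nhds_iff_ball.1 hpb
  -- the region `|t| ≥ η |c|`, by compactness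
  set K : Set (ℝ × ℝ) := {w | w.1 ^ 2 + w.2 ^ 2 = 1 ∧ η * |w.1| ≤ |w.2|} with hK
  have hKc : IsCompact K := by
    apply (isCompact_Icc (a := ((-1 : ℝ), (-1 : ℝ))) (b := ((1 : ℝ), (1 : ℝ)))).of_isClosed_subset
    · exact (isClosed_eq (f := fun w : ℝ × ℝ => w.1 ^ 2 + w.2 ^ 2) (g := fun _ => 1)
        (by fun_prop) continuous_const).inter
        (isClosed_le (f := fun w : ℝ × ℝ => η * |w.1|) (g := fun w => |w.2|)
        (by fun_prop) (by fun_prop))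
    · rintro ⟨c, t⟩ ⟨h, _⟩
      simp only at h
      simp only [Set.mem_Icc, Prod.mk_le_mk]
      refine ⟨⟨?_, ?_⟩, ?_, ?_⟩ <;> nlinarith
  have hfar : ∀ᶠ P : (ℝ × ℝ) × (ℝ × ℝ) × ℝ in 𝓝 (x₀, y₀, s₀), ∀ w ∈ K,
      pnorm q (comb q P.2.1 w.1 (P.2.2 * w.2)) < pnorm p (comb p P.1 w.1 w.2) := by
    apply hKc.eventually_forall_of_forall_eventually
    rintro ⟨c, t⟩ ⟨hct, hle⟩
    simp only at hct hle
    have ht : t ≠ 0 := by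
      rintro rfl
      have : |c| ≤ 0 := by
        rw [abs_zero] at hle
        by_contra! h
        nlinarith
      have := abs_eq_zero.1 (le_antisymm this (abs_nonneg _))
      subst this
      simp at hct
    have c1 : Continuous fun z : ((ℝ × ℝ) × (ℝ × ℝ) × ℝ) × ℝ × ℝ =>
        pnorm q (comb q z.1.2.1 z.2.1 (z.1.2.2 * z.2.2)) :=
      (continuous_pnorm hq).comp ((continuous_comb hq).comp
        (f := fun z : ((ℝ × ℝ) × (ℝ × ℝ) × ℝ) × ℝ × ℝ => (z.1.2.1, z.2.1, z.1.2.2 * z.2.2))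
        (by fun_prop))
    have c2 : Continuous fun z : ((ℝ × ℝ) × (ℝ × ℝ) × ℝ) × ℝ × ℝ =>
        pnorm p (comb p z.1.1 z.2.1 z.2.2) :=
      (continuous_pnorm hp).comp ((continuous_comb hp).comp
        (f := fun z : ((ℝ × ℝ) × (ℝ × ℝ) × ℝ) × ℝ × ℝ => (z.1.1, z.2.1, z.2.2)) (by fun_prop))
    exact c1.continuousAt.eventually_lt c2.continuousAt
      (contr_strict hq hy₀ h₁ h₂ hs hα hβ hαβ hs₀ ht)
  filter_upwards [hpa, hfar] with P hP1 hP2 hPx hPy c t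
  by_cases hct : η * |c| ≤ |t|
  · rcases eq_or_ne (c ^ 2 + t ^ 2) 0 with h0 | h0
    · have hc : c = 0 := by nlinarith [sq_nonneg t, sq_nonneg c]
      have ht : t = 0 := by nlinarith [sq_nonneg t, sq_nonneg c]
      subst hc ht
      simp only [comb, mul_zero, zero_mul, add_zero]
      have e1 : pnorm q (0, 0) = 0 := by
        rw [pnorm_eq, ← Prod.zero_eq_mk, psum_zero hq, Real.zero_rpow (by positivity)]
      rw [e1]
      exact pnorm_nonneg _ _
    · set k := Real.sqrt (c ^ 2 + t ^ 2) with hk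
      have hpos : 0 < c ^ 2 + t ^ 2 := lt_of_le_of_ne (by positivity) h0.symm
      have hk0 : 0 < k := Real.sqrt_pos.2 hpos
      have hk2 : k ^ 2 = c ^ 2 + t ^ 2 := Real.sq_sqrt hpos.le
      have hmem : (c / k, t / k) ∈ K := by
        refine ⟨?_, ?_⟩
        · simp only [div_pow, ← add_div, ← hk2]
          field_simp
        · simp only [abs_div, abs_of_pos hk0]
          rw [← mul_div_assoc]
          exact div_le_div_of_nonneg_right hct hk0.le
      have := (hP2 _ hmem).le
      simp only at this
      have e1 : comb p P.1 c t = k • comb p P.1 (c / k) (t / k) := by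
        rw [← comb_smul, mul_div_cancel₀ _ hk0.ne', mul_div_cancel₀ _ hk0.ne']
      have e2 : comb q P.2.1 c (P.2.2 * t) = k • comb q P.2.1 (c / k) (P.2.2 * (t / k)) := by
        rw [← comb_smul, mul_div_cancel₀ _ hk0.ne']
        congr 1
        field_simp
      rw [e1, e2, pnorm_smul hp, pnorm_smul hq]
      exact mul_le_mul_of_nonneg_left this (abs_nonneg _)
  · push Not at hct
    have hc : c ≠ 0 := by
      rintro rfl
      rw [abs_zero, mul_zero] at hct
      exact absurd hct (not_lt.2 (abs_nonneg _))
    have hc' := abs_pos.2 hc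
    have hball : t / c ∈ Metric.ball (0 : ℝ) η := by
      rw [mem_ball_zero_iff, Real.norm_eq_abs, abs_div, div_lt_iff₀ hc']
      exact hct
    have := hab hP1 (hpb _ hball) hPx hPy
    simp only at this
    have e1 : comb p P.1 c t = c • comb p P.1 1 (t / c) := by
      rw [← comb_smul, mul_div_cancel₀ _ hc, mul_one]
    have e2 : comb q P.2.1 c (P.2.2 * t) = c • comb q P.2.1 1 (P.2.2 * (t / c)) := by
      rw [← comb_smul, mul_one]
      congr 1
      field_simp
    rw [e1, e2, pnorm_smul hp, pnorm_smul hq]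
    exact mul_le_mul_of_nonneg_left this (abs_nonneg _)

/-! ### Operators, norm attainment and extremality -/

lemma app_comb (A : Matrix (Fin 2) (Fin 2) ℝ) (p : ℝ) (x : ℝ × ℝ) (c t : ℝ) :
    app A (comb p x c t) = c • app A x + t • app A (tang p x) := by
  ext <;> simp [app, comb] <;> ring

lemma app_add_smul (A B : Matrix (Fin 2) (Fin 2) ℝ) (a b : ℝ) (z : ℝ × ℝ) :
    app (a • A + b • B) z = a • app A z + b • app B z := by
  ext <;> simp [app] <;> ring

lemma app_smul (A : Matrix (Fin 2) (Fin 2) ℝ) (k : ℝ) (z : ℝ × ℝ) :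
    app A (k • z) = k • app A z := by
  ext <;> simp [app] <;> ring

lemma continuous_app :
    Continuous fun w : Matrix (Fin 2) (Fin 2) ℝ × ℝ × ℝ => app w.1 w.2 := by
  have h : ∀ i j, Continuous fun w : Matrix (Fin 2) (Fin 2) ℝ × ℝ × ℝ => w.1 i j :=
    fun i j => continuous_fst.matrix_elem i j
  have h00 := h 0 0
  have h01 := h 0 1
  have h10 := h 1 0
  have h11 := h 1 1
  unfold app
  fun_prop

lemma ext_app {A B : Matrix (Fin 2) (Fin 2) ℝ} (h : ∀ z, app A z = app B z) : A = B := by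
  have h1 := h (1, 0)
  have h2 := h (0, 1)
  simp only [app, mul_one, mul_zero, add_zero, zero_add, Prod.mk.injEq] at h1 h2
  ext i j
  fin_cases i <;> fin_cases j
  · exact h1.1
  · exact h2.1
  · exact h1.2
  · exact h2.2

lemma isCompact_sphere_pnorm {p : ℝ} (hp : 1 < p) : IsCompact {z : ℝ × ℝ | pnorm p z = 1} := by
  apply (isCompact_Icc (a := ((-1 : ℝ), (-1 : ℝ))) (b := ((1 : ℝ), (1 : ℝ)))).of_isClosed_subset
  · exact isClosed_eq (continuous_pnorm hp) continuous_const
  · intro z hz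
    have hz : psum p z = 1 := (pnorm_eq_one hp).1 hz
    have hp0 : 0 < p := by linarith
    have key : ∀ a b : ℝ, |a| ^ p + |b| ^ p = 1 → |a| ≤ 1 := by
      intro a b hab
      have : |a| ^ p ≤ 1 ^ p := by
        rw [Real.one_rpow]
        have := Real.rpow_nonneg (abs_nonneg b) p
        linarith
      exact (Real.rpow_le_rpow_iff (abs_nonneg _) zero_le_one hp0).1 this
    have h1 := abs_le.1 (key _ _ hz)
    have h2 := abs_le.1 (key _ _ ((add_comm _ _).trans hz))
    exact ⟨⟨h1.1, h2.1⟩, ⟨h1.2, h2.2⟩⟩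

lemma pnorm_basis {p : ℝ} (hp : 1 < p) :
    pnorm p (1, 0) = 1 ∧ pnorm p (0, 1) = 1 := by
  have : p ≠ 0 := by linarith
  constructor <;> simp [pnorm, Real.zero_rpow this]

lemma bddAbove_opNorm {p q : ℝ} (hp : 1 < p) (hq : 1 < q) (A : Matrix (Fin 2) (Fin 2) ℝ) :
    BddAbove {c : ℝ | ∃ z : ℝ × ℝ, pnorm p z = 1 ∧ c = pnorm q (app A z)} := by
  have hc : Continuous fun z : ℝ × ℝ => pnorm q (app A z) :=
    (continuous_pnorm hq).comp (continuous_app.comp (by fun_prop : Continuous fun z => (A, z)))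
  obtain ⟨M, hM⟩ := (isCompact_sphere_pnorm hp).bddAbove_image hc.continuousOn
  refine ⟨M, ?_⟩
  rintro c ⟨z, hz, rfl⟩
  exact hM ⟨z, hz, rfl⟩

lemma pnorm_app_le_opNorm {p q : ℝ} (hp : 1 < p) (hq : 1 < q) (A : Matrix (Fin 2) (Fin 2) ℝ)
    {z : ℝ × ℝ} (hz : pnorm p z = 1) : pnorm q (app A z) ≤ opNorm p q A :=
  le_csSup (bddAbove_opNorm hp hq A) ⟨z, hz, rfl⟩

lemma mem_unitBall_iff_sphere {p q : ℝ} (hp : 1 < p) (hq : 1 < q)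
    {A : Matrix (Fin 2) (Fin 2) ℝ} :
    A ∈ unitBall p q ↔ ∀ z, pnorm p z = 1 → pnorm q (app A z) ≤ 1 := by
  constructor
  · intro hA z hz
    exact (pnorm_app_le_opNorm hp hq A hz).trans hA
  · intro h
    refine csSup_le (⟨_, (1, 0), (pnorm_basis hp).1, rfl⟩ :
      {c : ℝ | ∃ z : ℝ × ℝ, pnorm p z = 1 ∧ c = pnorm q (app A z)}.Nonempty) ?_
    rintro c ⟨z, hz, rfl⟩
    exact h z hz

lemma mem_unitBall_iff {p q : ℝ} (hp : 1 < p) (hq : 1 < q) {A : Matrix (Fin 2) (Fin 2) ℝ} :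
    A ∈ unitBall p q ↔ ∀ z, pnorm q (app A z) ≤ pnorm p z := by
  rw [mem_unitBall_iff_sphere hp hq]
  constructor
  · intro h z
    rcases eq_or_ne z 0 with rfl | hz
    · have : app A 0 = 0 := by ext <;> simp [app]
      rw [this, pnorm_eq, psum_zero hq, Real.zero_rpow (by positivity)]
      exact pnorm_nonneg _ _
    · have hpos := pnorm_pos (r := p) hz
      have h1 := h ((pnorm p z)⁻¹ • z) (by
        rw [pnorm_smul hp, abs_of_pos (inv_pos.2 hpos), inv_mul_cancel₀ hpos.ne'])
      rw [app_smul, pnorm_smul hq, abs_of_pos (inv_pos.2 hpos), inv_mul_le_iff₀ hpos,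
        mul_one] at h1
      exact h1
  · intro h z hz
    exact (h z).trans hz.le

lemma abs_entry_le_opNorm {p q : ℝ} (hp : 1 < p) (hq : 1 < q) (A : Matrix (Fin 2) (Fin 2) ℝ)
    (i j : Fin 2) : |A i j| ≤ opNorm p q A := by
  have hq0 : 0 < q := by linarith
  have key : ∀ a b : ℝ, |a| ≤ pnorm q (a, b) ∧ |b| ≤ pnorm q (a, b) := by
    intro a b
    have ha := Real.rpow_nonneg (abs_nonneg a) q
    have hb := Real.rpow_nonneg (abs_nonneg b) q
    rw [pnorm_eq, psum, one_div]
    constructor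
    · rw [Real.le_rpow_inv_iff_of_pos (abs_nonneg _) (by positivity) hq0]
      simpa using hb
    · rw [Real.le_rpow_inv_iff_of_pos (abs_nonneg _) (by positivity) hq0]
      simpa using ha
  have h1 := pnorm_app_le_opNorm hp hq A (pnorm_basis hp).1
  have h2 := pnorm_app_le_opNorm hp hq A (pnorm_basis hp).2
  simp only [app, mul_one, mul_zero, add_zero, zero_add] at h1 h2
  fin_cases i <;> fin_cases j
  · exact (key _ _).1.trans h1
  · exact (key _ _).1.trans h2
  · exact (key _ _).2.trans h1
  · exact (key _ _).2.trans h2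

/-- The operator sending the unit vector `x` to `y` and the tangent direction at `x` to `s` times
the tangent direction at `y`. -/
def opMat (p q : ℝ) (x y : ℝ × ℝ) (s : ℝ) : Matrix (Fin 2) (Fin 2) ℝ :=
  tensor (sgnPow p x.1, sgnPow p x.2) y + s • tensor (rot x) (tang q y)

/-- The parameter `s` for which `A` can equal `opMat p q x (app A x) s`. -/
def tslope (p : ℝ) (A : Matrix (Fin 2) (Fin 2) ℝ) (x : ℝ × ℝ) : ℝ :=
  (rot (app A x)).1 * (app A (tang p x)).1 + (rot (app A x)).2 * (app A (tang p x)).2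

lemma app_opMat {p q : ℝ} (hp : 1 < p) {x : ℝ × ℝ} (hx : psum p x = 1) (y : ℝ × ℝ) (s c t : ℝ) :
    app (opMat p q x y s) (comb p x c t) = comb q y c (s * t) := by
  rw [psum, ← sgnPow_mul_self hp, ← sgnPow_mul_self hp] at hx
  ext
  · simp only [app, opMat, tensor, comb, tang, rot, Matrix.add_apply, Matrix.smul_apply,
      Matrix.of_apply, Matrix.cons_val', Matrix.cons_val_zero, Matrix.cons_val_one,
      Matrix.cons_val_fin_one, smul_eq_mul]
    linear_combination (c * y.1 - s * t * sgnPow q y.2) * hx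
  · simp only [app, opMat, tensor, comb, tang, rot, Matrix.add_apply, Matrix.smul_apply,
      Matrix.of_apply, Matrix.cons_val', Matrix.cons_val_zero, Matrix.cons_val_one,
      Matrix.cons_val_fin_one, smul_eq_mul]
    linear_combination (c * y.2 + s * t * sgnPow q y.1) * hx

lemma exists_comb {p : ℝ} (hp : 1 < p) {x : ℝ × ℝ} (hx : psum p x = 1) (z : ℝ × ℝ) :
    ∃ c t, z = comb p x c t := by
  rw [psum, ← sgnPow_mul_self hp, ← sgnPow_mul_self hp] at hx
  refine ⟨sgnPow p x.1 * z.1 + sgnPow p x.2 * z.2, -x.2 * z.1 + x.1 * z.2, ?_⟩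
  ext
  · simp only [comb, tang, rot]
    linear_combination -z.1 * hx
  · simp only [comb, tang, rot]
    linear_combination -z.2 * hx

lemma comb_one_zero (p : ℝ) (x : ℝ × ℝ) : comb p x 1 0 = x := by simp [comb]

lemma comb_zero_one (p : ℝ) (x : ℝ × ℝ) : comb p x 0 1 = tang p x := by simp [comb]

lemma opMat_mem_iff {p q : ℝ} (hp : 1 < p) (hq : 1 < q) {x y : ℝ × ℝ} (hx : psum p x = 1)
    {s : ℝ} : opMat p q x y s ∈ unitBall p q ↔ Contr p q x y s := by
  rw [mem_unitBall_iff hp hq]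
  constructor
  · intro h c t
    rw [← app_opMat hp hx]
    exact h _
  · intro h z
    obtain ⟨c, t, rfl⟩ := exists_comb hp hx z
    rw [app_opMat hp hx]
    exact h c t

lemma tslope_opMat {p q : ℝ} (hp : 1 < p) (hq : 1 < q) {x y : ℝ × ℝ} (hx : psum p x = 1)
    (hy : psum q y = 1) (s : ℝ) : tslope p (opMat p q x y s) x = s := by
  have h1 := app_opMat (q := q) hp hx y s 1 0
  have h2 := app_opMat (q := q) hp hx y s 0 1
  rw [comb_one_zero, mul_zero, comb_one_zero] at h1
  rw [comb_zero_one, mul_one] at h2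
  have h3 := rot_tang hq hy
  rw [tslope, h1, h2]
  simp only [comb]
  linear_combination s * h3

lemma hasDerivAt_psum_line {r : ℝ} (hr : 1 < r) (a b : ℝ × ℝ) :
    HasDerivAt (fun t : ℝ => psum r (a + t • b))
      (r * (sgnPow r a.1 * b.1 + sgnPow r a.2 * b.2)) 0 := by
  have key : ∀ u v : ℝ, HasDerivAt (fun t : ℝ => |u + t * v| ^ r) (r * sgnPow r u * v) 0 := by
    intro u v
    have h1 : HasDerivAt (fun t : ℝ => u + t * v) v 0 := by
      simpa using ((hasDerivAt_id (0 : ℝ)).mul_const v).const_add u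
    have h2 : HasDerivAt (fun x : ℝ => |x| ^ r) (r * sgnPow r u) (u + 0 * v) := by
      simpa using hasDerivAt_abs_rpow' hr u
    exact h2.comp 0 h1
  refine ((key a.1 b.1).add (key a.2 b.2)).congr_deriv ?_
  ring

/-- A contraction mapping a unit vector `x` to a unit vector preserves the tangent line there:
otherwise moving along the tangent direction increases the norm of the image to first order. -/
lemma eq_opMat {p q : ℝ} (hp : 1 < p) (hq : 1 < q) {A : Matrix (Fin 2) (Fin 2) ℝ}
    (hA : A ∈ unitBall p q) {x : ℝ × ℝ} (hx : psum p x = 1) (hy : psum q (app A x) = 1) :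
    A = opMat p q x (app A x) (tslope p A x) := by
  rw [mem_unitBall_iff hp hq] at hA
  set y := app A x with hyA
  set v := tang p x with hv
  set α := sgnPow q y.1 * (app A v).1 + sgnPow q y.2 * (app A v).2 with hα
  have hα0 : α = 0 := by
    have d1 := (hasDerivAt_psum_line hp x v).rpow_const (p := 1 / p) (Or.inl (by simp [hx]))
    have d2 := (hasDerivAt_psum_line hq y (app A v)).rpow_const (p := 1 / q)
      (Or.inl (by simp [hy]))
    have hmin : IsLocalMin (fun t : ℝ => psum p (x + t • v) ^ (1 / p)
        - psum q (y + t • app A v) ^ (1 / q)) 0 := by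
      apply Filter.Eventually.of_forall
      intro t
      have e : app A (x + t • v) = y + t • app A v := by
        ext <;> simp [app, hyA] <;> ring
      have := hA (x + t • v)
      rw [e, pnorm_eq, pnorm_eq] at this
      simp only [zero_smul, add_zero, hx, hy, Real.one_rpow, sub_self]
      linarith
    -- the derivative of the source norm vanishes along the tangent direction
    have h0 := hmin.hasDerivAt_eq_zero (d1.sub d2)
    simp only [zero_smul, add_zero, hx, hy, Real.one_rpow, ← hα] at h0
    have e1 : sgnPow p x.1 * v.1 + sgnPow p x.2 * v.2 = 0 := by
      simp only [hv, tang, rot]; ring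
    rw [e1] at h0
    field_simp at h0
    linarith
  apply ext_app
  intro z
  obtain ⟨c, t, rfl⟩ := exists_comb hp hx z
  rw [app_opMat hp hx, app_comb, ← hyA, ← hv]
  have hsl : tslope p A x = -y.2 * (app A v).1 + y.1 * (app A v).2 := rfl
  have hy' := hy
  rw [psum, ← sgnPow_mul_self hq, ← sgnPow_mul_self hq] at hy'
  have e1 : (app A v).1 = tslope p A x * (tang q y).1 := by
    rw [hsl]
    simp only [tang, rot]
    linear_combination y.1 * (hα.symm.trans hα0) - (app A v).1 * hy'
  have e2 : (app A v).2 = tslope p A x * (tang q y).2 := by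
    rw [hsl]
    simp only [tang, rot]
    linear_combination y.2 * (hα.symm.trans hα0) - (app A v).2 * hy'
  ext
  · simp only [comb, Prod.fst_add, Prod.smul_fst, smul_eq_mul]
    linear_combination t * e1
  · simp only [comb, Prod.snd_add, Prod.smul_snd, smul_eq_mul]
    linear_combination t * e2

/-- An extreme point is not the midpoint of a nondegenerate segment in the ball. -/
lemma extreme_perturb {p q : ℝ} {S R : Matrix (Fin 2) (Fin 2) ℝ}
    (hS : S ∈ Set.extremePoints ℝ (unitBall p q)) (h1 : S + R ∈ unitBall p q)
    (h2 : S - R ∈ unitBall p q) : R = 0 := by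
  have := ((mem_extremePoints.1 hS).2 _ h1 _ h2 ⟨1 / 2, 1 / 2, by norm_num, by norm_num,
    by norm_num, by module⟩).1
  simpa using this

/-- An extreme contraction has norm one, and the norm is attained by compactness. -/
lemma extreme_attains {p q : ℝ} (hp : 1 < p) (hq : 1 < q) {S : Matrix (Fin 2) (Fin 2) ℝ}
    (hS : S ∈ Set.extremePoints ℝ (unitBall p q)) :
    ∃ x, psum p x = 1 ∧ psum q (app S x) = 1 := by
  by_contra! hne
  have hball := (mem_unitBall_iff_sphere hp hq).1 hS.1
  have hev : ∀ᶠ ε : ℝ in 𝓝 0, ∀ z ∈ {z : ℝ × ℝ | pnorm p z = 1},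
      pnorm q (app (S + ε • (1 : Matrix (Fin 2) (Fin 2) ℝ)) z) < 1 := by
    apply (isCompact_sphere_pnorm hp).eventually_forall_of_forall_eventually
    intro z hz
    have hc : Continuous fun w : ℝ × ℝ × ℝ =>
        pnorm q (app (S + w.1 • (1 : Matrix (Fin 2) (Fin 2) ℝ)) w.2) :=
      (continuous_pnorm hq).comp (continuous_app.comp
        (f := fun w : ℝ × ℝ × ℝ => (S + w.1 • (1 : Matrix (Fin 2) (Fin 2) ℝ), w.2))
        (by fun_prop))
    apply hc.continuousAt.eventually_lt continuousAt_const
    simp only [zero_smul, add_zero]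
    refine lt_of_le_of_ne (hball z hz) fun h => ?_
    exact hne z ((pnorm_eq_one hp).1 hz) ((pnorm_eq_one hq).1 h)
  obtain ⟨ρ, hρ, h⟩ := Metric.eventually_nhds_iff_ball.1 hev
  have m1 := h (ρ / 2) (by rw [mem_ball_zero_iff, Real.norm_eq_abs, abs_of_pos] <;> linarith)
  have m2 := h (-(ρ / 2)) (by
    rw [mem_ball_zero_iff, norm_neg, Real.norm_eq_abs, abs_of_pos] <;> linarith)
  have := extreme_perturb (R := (ρ / 2) • (1 : Matrix (Fin 2) (Fin 2) ℝ)) hS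
    ((mem_unitBall_iff_sphere hp hq).2 fun z hz => (m1 z hz).le)
    ((mem_unitBall_iff_sphere hp hq).2 fun z hz => by
      rw [sub_eq_add_neg, ← neg_smul]
      exact (m2 z hz).le)
  have h00 := congrFun (congrFun this 0) 0
  simp at h00
  linarith

lemma continuous_params {p : ℝ} (hp : 1 < p) :
    Continuous fun w : Matrix (Fin 2) (Fin 2) ℝ × ℝ × ℝ => (w.2, app w.1 w.2, tslope p w.1 w.2) := by
  have h1 := continuous_app
  have h2 : Continuous fun w : Matrix (Fin 2) (Fin 2) ℝ × ℝ × ℝ => app w.1 (tang p w.2) :=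
    continuous_app.comp (continuous_fst.prodMk ((continuous_tang hp).comp continuous_snd))
  have h3 : Continuous fun w : Matrix (Fin 2) (Fin 2) ℝ × ℝ × ℝ => tslope p w.1 w.2 := by
    simp only [tslope, rot]
    exact (((continuous_snd.comp h1).neg).mul (continuous_fst.comp h2)).add
      ((continuous_fst.comp h1).mul (continuous_snd.comp h2))
  exact continuous_snd.prodMk (h1.prodMk h3)

/-- A contraction attaining norm one at `x`, if not extreme, lies in the interior of the
one-parameter family of contractions with the same value at `x`. -/
lemma exists_segment {p q : ℝ} (hp : 1 < p) (hq : 1 < q) {T : Matrix (Fin 2) (Fin 2) ℝ}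
    (hT : T ∈ unitBall p q) (hne : T ∉ Set.extremePoints ℝ (unitBall p q)) {x : ℝ × ℝ}
    (hx : psum p x = 1) (hy : psum q (app T x) = 1) :
    ∃ s₁ s₂ α β : ℝ, Contr p q x (app T x) s₁ ∧ Contr p q x (app T x) s₂ ∧ s₁ ≠ s₂ ∧ 0 < α ∧
      0 < β ∧ α + β = 1 ∧ tslope p T x = α * s₁ + β * s₂ := by
  rw [mem_extremePoints] at hne
  push Not at hne
  obtain ⟨A, hA, B, hB, ⟨α, β, hα, hβ, hαβ, hT'⟩, hAB⟩ := hne hT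
  have hne : A ≠ B := by
    rintro rfl
    rw [← add_smul, hαβ, one_smul] at hT'
    exact hAB hT' hT'
  have happ : ∀ z, app T z = α • app A z + β • app B z := fun z => by rw [← hT', app_add_smul]
  have hx' := (pnorm_eq_one hp).2 hx
  have hABx : app A x = app B x := by
    by_contra h
    have := pnorm_strict hq ((mem_unitBall_iff_sphere hp hq).1 hA x hx')
      ((mem_unitBall_iff_sphere hp hq).1 hB x hx') h hα hβ hαβ
    rw [← happ, (pnorm_eq_one hq).2 hy] at this
    exact lt_irrefl _ this
  have hAx : app A x = app T x := by
    rw [happ, ← hABx, ← add_smul, hαβ, one_smul]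
  have hBx : app B x = app T x := hABx ▸ hAx
  have eA := eq_opMat hp hq hA hx (hAx ▸ hy)
  have eB := eq_opMat hp hq hB hx (hBx ▸ hy)
  rw [hAx] at eA
  rw [hBx] at eB
  refine ⟨tslope p A x, tslope p B x, α, β, ?_, ?_, ?_, hα, hβ, hαβ, ?_⟩
  · rw [← opMat_mem_iff hp hq hx, ← eA]
    exact hA
  · rw [← opMat_mem_iff hp hq hx, ← eB]
    exact hB
  · intro h
    apply hne
    rw [eA, eB, h]
  · simp only [tslope, hAx, hBx]
    rw [happ (tang p x)]
    simp only [Prod.fst_add, Prod.snd_add, Prod.smul_fst, Prod.smul_snd, smul_eq_mul]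
    ring

/-- In the cases p = q = 2; p = 2, q ≠ 2; q = 2, p ≠ 2; and 1 < q < 2 < p < ∞, the set of
  extreme points of the unit ball of L(ℓ^p_2, ℓ^q_2) is closed in the operator norm. -/
theorem stmt_15 (p q : ℝ) (hp : 1 < p) (hq : 1 < q)
    (h : (p = 2 ∧ q = 2) ∨ (p = 2 ∧ q ≠ 2) ∨ (q = 2 ∧ p ≠ 2) ∨ (q < 2 ∧ 2 < p)) :
    ∀ T : Matrix (Fin 2) (Fin 2) ℝ,
      (∀ ε : ℝ, 0 < ε → ∃ S ∈ Set.extremePoints ℝ (unitBall p q), opNorm p q (T - S) < ε) →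
      T ∈ Set.extremePoints ℝ (unitBall p q) := by
  have hpq : p = 2 ∨ q = 2 ∨ (q < 2 ∧ 2 < p) := by tauto
  intro T hT
  choose S hS hST using fun n : ℕ => hT (1 / ((n : ℝ) + 1)) (by positivity)
  have hlim : Tendsto S atTop (𝓝 T) := by
    refine tendsto_pi_nhds.2 fun i => tendsto_pi_nhds.2 fun j => ?_
    rw [tendsto_iff_norm_sub_tendsto_zero]
    refine squeeze_zero (fun _ => norm_nonneg _) (fun n => ?_)
      tendsto_one_div_add_atTop_nhds_zero_nat
    rw [norm_sub_rev, Real.norm_eq_abs]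
    exact (abs_entry_le_opNorm hp hq (T - S n) i j).trans (hST n).le
  choose x hx hy using fun n => extreme_attains hp hq (hS n)
  obtain ⟨x₀, hx₀, φ, hφ, hxlim⟩ := (isCompact_sphere_pnorm hp).tendsto_subseq
    (x := x) (fun n => (pnorm_eq_one hp).2 (hx n))
  have hx₀ : psum p x₀ = 1 := (pnorm_eq_one hp).1 hx₀
  have hSφ := hlim.comp hφ.tendsto_atTop
  have hpar := ((continuous_params hp).tendsto (T, x₀)).comp (hSφ.prodMk_nhds hxlim)
  have hTball : T ∈ unitBall p q := by
    rw [mem_unitBall_iff hp hq]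
    intro z
    have hc : Continuous fun A : Matrix (Fin 2) (Fin 2) ℝ => pnorm q (app A z) :=
      (continuous_pnorm hq).comp (continuous_app.comp (continuous_id.prodMk continuous_const))
    exact le_of_tendsto ((hc.tendsto T).comp hlim)
      (Eventually.of_forall fun n => (mem_unitBall_iff hp hq).1 (hS n).1 z)
  have hy₀ : psum q (app T x₀) = 1 := by
    have h1 := ((((continuous_psum hq).comp continuous_app).tendsto (T, x₀)).comp
      (hSφ.prodMk_nhds hxlim))
    refine tendsto_nhds_unique h1 (tendsto_const_nhds.congr fun n => ?_)
    exact (hy (φ n)).symm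
  by_contra hne
  obtain ⟨s₁, s₂, α, β, h₁, h₂, hs, hα, hβ, hαβ, hs₀⟩ := exists_segment hp hq hTball hne hx₀ hy₀
  have hev := contr_eventually hp hq hpq hx₀ hy₀ h₁ h₂ hs hα hβ hαβ hs₀
  -- shifting the last parameter by a small `ε` in both directions keeps `S (φ n)` contractive
  have hshift : ∀ᶠ w : ((ℝ × ℝ) × (ℝ × ℝ) × ℝ) × ℝ in
      𝓝 ((x₀, app T x₀, tslope p T x₀), 0), psum p w.1.1 = 1 → psum q w.1.2.1 = 1 →
        Contr p q w.1.1 w.1.2.1 (w.1.2.2 + w.2) := by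
    have hc : Continuous fun w : ((ℝ × ℝ) × (ℝ × ℝ) × ℝ) × ℝ =>
        (w.1.1, w.1.2.1, w.1.2.2 + w.2) := by fun_prop
    have ht := hc.tendsto ((x₀, app T x₀, tslope p T x₀), 0)
    simp only [add_zero] at ht
    exact ht.eventually hev
  rw [nhds_prod_eq, eventually_prod_iff] at hshift
  obtain ⟨pa, hpa, pb, hpb, hab⟩ := hshift
  obtain ⟨ρ, hρ, hpb⟩ := Metric.eventually_nhds_iff_ball.1 hpb
  obtain ⟨n, hn⟩ := (hpar.eventually hpa).exists
  have b1 : pb (ρ / 2) := hpb _ (by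
    rw [mem_ball_zero_iff, Real.norm_eq_abs, abs_of_pos] <;> linarith)
  have b2 : pb (-(ρ / 2)) := hpb _ (by
    rw [mem_ball_zero_iff, norm_neg, Real.norm_eq_abs, abs_of_pos] <;> linarith)
  have c1 := (opMat_mem_iff hp hq (hx (φ n))).2 (hab hn b1 (hx _) (hy _))
  have c2 := (opMat_mem_iff hp hq (hx (φ n))).2 (hab hn b2 (hx _) (hy _))
  set m := φ n
  simp only [Function.comp] at c1 c2
  have eS := eq_opMat hp hq (hS m).1 (hx m) (hy m)
  set R := (ρ / 2) • tensor (rot (x m)) (tang q (app (S m) (x m))) with hR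
  have e1 : opMat p q (x m) (app (S m) (x m)) (tslope p (S m) (x m) + ρ / 2) = S m + R := by
    conv_rhs => rw [eS]
    simp only [opMat, hR]
    module
  have e2 : opMat p q (x m) (app (S m) (x m)) (tslope p (S m) (x m) + -(ρ / 2)) = S m - R := by
    conv_rhs => rw [eS]
    simp only [opMat, hR]
    module
  have hR0 : R = 0 := extreme_perturb (hS m) (e1 ▸ c1) (e2 ▸ c2)
  have hsl := tslope_opMat hp hq (hx m) (hy m) (tslope p (S m) (x m) + ρ / 2)
  rw [e1, hR0, add_zero] at hsl
  linarith
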